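/- Let G be a 4-regular planar graph with a cutpoint c separating G₁ and G₂, and let G'_i be G_i with a self-loop added at c (making c degree 4). If an embedding of G has threaded circuit partition C, and embeddings of G'_1, G'_2 (induced from that of G) have threaded circuit partitions C₁ and C₂, then |C| = |C₁| + |C₂| − 1. -/

import Mathlib

/-!
A combinatorial map ("plane graph" via rotation system): `D` is the set of darts
(edge-ends); `rot` is the counterclockwise rotation of darts around their vertex
(vertices are `rot`-orbits); `inv` pairs the two darts of each edge
(edges are `inv`-orbits, of size 2).
-/
structure CombMap (D : Type) [Fintype D] [DecidableEq D] where
  rot : Equiv.Perm D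
  inv : Equiv.Perm D
  inv_invol : ∀ d, inv (inv d) = d
  inv_ne : ∀ d, inv d ≠ d

namespace CombMap

variable {D : Type} [Fintype D] [DecidableEq D] (M : CombMap D)

/-- Every vertex has degree 4: each `rot`-orbit has size exactly 4. -/
def FourRegular : Prop :=
  (∀ d, M.rot (M.rot (M.rot (M.rot d))) = d) ∧ (∀ d, M.rot d ≠ d) ∧
    (∀ d, M.rot (M.rot d) ≠ d)

/-- `IsThread d e`: the length-two path consisting of the edge of dart `d`
(traversed from the vertex of `d` to the vertex of `inv d`, the midpoint)
followed by the edge of dart `e` is a thread: `e` is a dart at the midpoint and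
the two edges are not contiguous in the rotation at the midpoint. -/
def IsThread (d e : D) : Prop :=
  M.rot.SameCycle (M.inv d) e ∧ e ≠ M.inv d ∧ e ≠ M.rot (M.inv d) ∧
    M.rot e ≠ M.inv d

/-- Traversing the edge of dart `d` and continuing straight through the vertex
at its far end: the unique continuation of a threaded circuit. -/
def threadStep (d : D) : D := M.rot (M.rot (M.inv d))

/-- A set of darts closed under continuing along threads and under reversal:
closed unions of (undirected) threaded circuits. -/
def ClosedTC (s : Set D) : Prop := ∀ x ∈ s, M.threadStep x ∈ s ∧ M.inv x ∈ s

/-- The set of darts of a single (undirected) threaded circuit: a minimal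
nonempty set of darts closed under thread-continuation and reversal. -/
def Circuit (s : Set D) : Prop :=
  s.Nonempty ∧ M.ClosedTC s ∧ ∀ t ⊆ s, t.Nonempty → M.ClosedTC t → t = s

/-- The number of circuits in the threaded circuit partition. -/
noncomputable def circuitCount : ℕ := Set.ncard {s : Set D | M.Circuit s}

/-- Reachability between darts by walking along edges and around vertices,
avoiding the darts in `A`. -/
def ReachAvoiding (A : Set D) (a b : D) : Prop :=
  Relation.ReflTransGen
    (fun x y => (y = M.rot x ∨ y = M.inv x) ∧ x ∉ A ∧ y ∉ A) a b

/-- The graph is connected. -/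
def Connected : Prop := ∀ a b : D, M.ReachAvoiding ∅ a b

/-- Number of vertices: the number of `rot`-orbits. -/
noncomputable def vertexCount : ℕ :=
  Set.ncard {s : Set D | ∃ d, s = {e | M.rot.SameCycle d e}}

/-- Number of edges: the number of `inv`-orbits. -/
noncomputable def edgeCount : ℕ :=
  Set.ncard {s : Set D | ∃ d, s = {e | M.inv.SameCycle d e}}

/-- Number of faces: the number of orbits of the face permutation `rot ∘ inv`. -/
noncomputable def faceCount : ℕ :=
  Set.ncard {s : Set D | ∃ d, s = {e | (M.rot * M.inv).SameCycle d e}}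

/-- The embedding is planar (genus 0): Euler's formula `V - E + F = 2` holds. -/
def EulerPlanar : Prop :=
  (M.vertexCount : ℤ) - (M.edgeCount : ℤ) + (M.faceCount : ℤ) = 2

end CombMap

/-!
Over `ZMod 2`, Euler's formula makes every cycle of a plane graph the boundary of a 2-colouring of
its faces. If the two sides of the cut vertex `c` alternated around `c`, the edges of one side would
form a cycle, and exactly one of the two edge-ends at `c` of the other side would lie inside it,
contradicting the handshake lemma. Hence both threads through `c` lead from one side to the other.

A circuit changes sides an even number of times, so the two threads through `c` lie on a single
circuit. This applies equally to `G'₁` and `G'₂`, where the loop plays the role of the other side.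
Every remaining circuit of `G` avoids `c`, stays on one side, and is a circuit of exactly one of
`G'₁` and `G'₂`.
-/

/-! ### Cycles and 2-colourings of faces -/

section InvariantFunctions

variable {D : Type*} (K : Type*)

/-- The space of `K`-valued functions constant on the orbits of the permutation `σ`. For the
permutations `rot`, `inv` and `rot * inv` of a combinatorial map these are the functions on its
vertices, edges and faces. -/
def invariantFunctions [Semiring K] (σ : Equiv.Perm D) : Submodule K (D → K) :=
  LinearMap.eqLocus (LinearMap.funLeft K K σ) LinearMap.id

variable {K}

lemma mem_invariantFunctions [Semiring K] {σ : Equiv.Perm D} {f : D → K} :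
    f ∈ invariantFunctions K σ ↔ ∀ d, f (σ d) = f d :=
  funext_iff

lemma apply_eq_of_sameCycle {α : Type*} {σ : Equiv.Perm D} {f : D → α}
    (hf : ∀ d, f (σ d) = f d) {d e : D} (h : σ.SameCycle d e) : f e = f d := by
  have hpow (n : ℕ) (d : D) : f ((σ ^ n) d) = f d := by
    rw [← Equiv.Perm.iterate_eq_pow]
    exact congrFun (Function.iterate_invariant (funext hf) n) d
  obtain ⟨n | n, rfl⟩ := h
  · exact hpow n d
  · simpa using (hpow (n + 1) ((σ ^ (n + 1))⁻¹ d)).symm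

lemma range_funLeft_mk_sameCycle [Semiring K] (σ : Equiv.Perm D) :
    LinearMap.range (LinearMap.funLeft K K (Quotient.mk (Equiv.Perm.SameCycle.setoid σ))) =
      invariantFunctions K σ := by
  ext f
  rw [mem_invariantFunctions]
  constructor
  · rintro ⟨g, rfl⟩ d
    exact congrArg g (Quotient.sound (Equiv.Perm.sameCycle_apply_left.2 .rfl))
  · intro hf
    exact ⟨Quotient.lift f fun _ _ h => (apply_eq_of_sameCycle hf h).symm, rfl⟩

lemma finrank_invariantFunctions [Finite D] [Field K] (σ : Equiv.Perm D) :
    Module.finrank K (invariantFunctions K σ) =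
      Set.ncard {s : Set D | ∃ d, s = {e | σ.SameCycle d e}} := by
  have := Fintype.ofFinite (Quotient (Equiv.Perm.SameCycle.setoid σ))
  have horbits : {s : Set D | ∃ d, s = {e | σ.SameCycle d e}} =
      (Equiv.Perm.SameCycle.setoid σ).classes := by
    ext s
    refine exists_congr fun d => ?_
    simp only [σ.sameCycle_comm (x := d)]
    rfl
  rw [← range_funLeft_mk_sameCycle,
    LinearMap.finrank_range_of_inj
      (LinearMap.funLeft_injective_of_surjective _ _ _ Quotient.mk_surjective),
    Module.finrank_pi, ← Nat.card_eq_fintype_card, horbits, ← Nat.card_coe_set_eq]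
  exact Nat.card_congr (Setoid.quotientEquivClasses _)

end InvariantFunctions

section DotForm

variable (ι K : Type*) [Fintype ι] [Field K]

/-- The dot product on `ι → K` as a bilinear form. -/
def dotForm : LinearMap.BilinForm K (ι → K) := dotProductBilin K K

lemma dotForm_nondegenerate : (dotForm ι K).Nondegenerate := by
  have hsymm : (dotForm ι K).IsSymm := ⟨fun x y => dotProduct_comm x y⟩
  exact (LinearMap.IsRefl.nondegenerate_iff_separatingLeft hsymm.isRefl).2 dotProduct_eq_zero

variable {ι K}

lemma finrank_dotForm_orthogonal_add (W : Submodule K (ι → K)) :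
    Module.finrank K ((dotForm ι K).orthogonal W) + Module.finrank K W = Fintype.card ι := by
  rw [LinearMap.BilinForm.finrank_orthogonal (dotForm_nondegenerate ι K), ← Module.finrank_pi K,
    Nat.sub_add_cancel W.finrank_le]

end DotForm

lemma orthogonal_sup_eq_inf {R V : Type*} [CommSemiring R] [AddCommMonoid V] [Module R V]
    (B : LinearMap.BilinForm R V) (W W' : Submodule R V) :
    B.orthogonal (W ⊔ W') = B.orthogonal W ⊓ B.orthogonal W' := by
  refine le_antisymm (le_inf (LinearMap.BilinForm.orthogonal_le le_sup_left)
    (LinearMap.BilinForm.orthogonal_le le_sup_right)) fun v ⟨hW, hW'⟩ u hu => ?_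
  obtain ⟨w, hw, w', hw', rfl⟩ := Submodule.mem_sup.1 hu
  rw [LinearMap.map_add₂, hW w hw, hW' w' hw', add_zero]

lemma finrank_map_add_finrank_inf_ker {K V W : Type*} [Field K] [AddCommGroup V] [Module K V]
    [FiniteDimensional K V] [AddCommGroup W] [Module K W] (L : V →ₗ[K] W) (U : Submodule K V) :
    Module.finrank K (U.map L) + Module.finrank K (U ⊓ LinearMap.ker L : Submodule K V) =
      Module.finrank K U := by
  rw [← (L.domRestrict U).finrank_range_add_finrank_ker, LinearMap.range_domRestrict,
    LinearMap.ker_domRestrict, ← Submodule.map_comap_subtype,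
    Submodule.finrank_map_subtype_eq]

namespace CombMap

variable {D : Type} [Fintype D] [DecidableEq D] {M : CombMap D}

lemma sum_eq_zero_of_apply_inv_eq {φ : D → ZMod 2} (hφ : ∀ d, φ (M.inv d) = φ d) :
    ∑ d, φ d = 0 :=
  Finset.sum_ninvolution M.inv (fun d => by rw [hφ, CharTwo.add_self_eq_zero])
    (fun d _ => M.inv_ne d) (fun _ => Finset.mem_univ _) M.inv_invol

lemma dotForm_orthogonal_invariantFunctions_inv (M : CombMap D) :
    (dotForm D (ZMod 2)).orthogonal (invariantFunctions (ZMod 2) M.inv) =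
      invariantFunctions (ZMod 2) M.inv := by
  ext g
  rw [LinearMap.BilinForm.mem_orthogonal_iff, mem_invariantFunctions]
  constructor
  · intro hg d
    have hedge : (Pi.single d 1 + Pi.single (M.inv d) 1 : D → ZMod 2) ∈
        invariantFunctions (ZMod 2) M.inv := by
      rw [mem_invariantFunctions]
      intro e
      have hswap : M.inv e = d ↔ e = M.inv d := by
        rw [← M.inv.injective.eq_iff, M.inv_invol]
      simp only [Pi.add_apply, Pi.single_apply, hswap, M.inv.injective.eq_iff]
      exact add_comm _ _
    have hsum : g d + g (M.inv d) = 0 := by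
      simpa [dotForm, add_dotProduct] using hg _ hedge
    exact (CharTwo.add_eq_zero.1 hsum).symm
  · intro hg f hf
    refine M.sum_eq_zero_of_apply_inv_eq fun d => ?_
    rw [hg, mem_invariantFunctions.1 hf]

/-- The cycle space over `ZMod 2`: functions on the edges whose sum around every vertex vanishes,
the latter being expressed as orthogonality to all functions on the vertices. -/
def cycleSpace (M : CombMap D) : Submodule (ZMod 2) (D → ZMod 2) :=
  (dotForm D (ZMod 2)).orthogonal (invariantFunctions (ZMod 2) M.rot) ⊓
    invariantFunctions (ZMod 2) M.inv

/-- The boundary operator from faces to edges over `ZMod 2`: the value at an edge is the sum of the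
values at the faces on its two sides, the face of a dart `d` being its orbit under `rot * inv`. -/
def faceBoundary (M : CombMap D) : (D → ZMod 2) →ₗ[ZMod 2] (D → ZMod 2) :=
  LinearMap.id + LinearMap.funLeft (ZMod 2) (ZMod 2) M.inv

lemma faceBoundary_apply (f : D → ZMod 2) (d : D) : M.faceBoundary f d = f d + f (M.inv d) :=
  rfl

lemma apply_rot_eq_apply_inv {f : D → ZMod 2}
    (hf : f ∈ invariantFunctions (ZMod 2) (M.rot * M.inv)) (d : D) :
    f (M.rot d) = f (M.inv d) := by
  simpa only [Equiv.Perm.mul_apply, M.inv_invol] using mem_invariantFunctions.1 hf (M.inv d)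

lemma map_faceBoundary_le_cycleSpace (M : CombMap D) :
    (invariantFunctions (ZMod 2) (M.rot * M.inv)).map M.faceBoundary ≤ M.cycleSpace := by
  rintro _ ⟨f, hf, rfl⟩
  refine ⟨fun r hr => ?_, mem_invariantFunctions.2 fun d => ?_⟩
  · have hshift : ∑ d, r d * f (M.inv d) = ∑ d, r d * f d := by
      rw [← Equiv.sum_comp M.rot fun d => r d * f d]
      simp only [mem_invariantFunctions.1 hr, apply_rot_eq_apply_inv hf]
    change ∑ d, r d * M.faceBoundary f d = 0
    simp only [faceBoundary_apply, mul_add, Finset.sum_add_distrib, hshift,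
      CharTwo.add_self_eq_zero]
  · rw [faceBoundary_apply, faceBoundary_apply, M.inv_invol, add_comm]

lemma invariantFunctions_inf_ker_faceBoundary (M : CombMap D) :
    invariantFunctions (ZMod 2) (M.rot * M.inv) ⊓ LinearMap.ker M.faceBoundary =
      invariantFunctions (ZMod 2) M.rot ⊓ invariantFunctions (ZMod 2) M.inv := by
  have hker (f : D → ZMod 2) :
      f ∈ LinearMap.ker M.faceBoundary ↔ f ∈ invariantFunctions (ZMod 2) M.inv := by
    simp only [LinearMap.mem_ker, funext_iff, faceBoundary_apply, Pi.zero_apply,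
      CharTwo.add_eq_zero, mem_invariantFunctions]
    exact forall_congr' fun d => eq_comm
  ext f
  rw [Submodule.mem_inf, Submodule.mem_inf, hker]
  refine and_congr_left fun hinv => ?_
  simp only [mem_invariantFunctions] at hinv ⊢
  refine ⟨fun hface d => ?_, fun hrot d => ?_⟩
  · rw [apply_rot_eq_apply_inv (mem_invariantFunctions.2 hface), hinv]
  · rw [Equiv.Perm.mul_apply, hrot, hinv]

lemma Connected.apply_eq {α : Type*} (hconn : M.Connected) {f : D → α}
    (hrot : ∀ d, f (M.rot d) = f d) (hinv : ∀ d, f (M.inv d) = f d) (a b : D) : f a = f b := by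
  induction hconn a b with
  | refl => rfl
  | tail _ hstep ih =>
    rcases hstep.1 with rfl | rfl
    · rw [ih, hrot]
    · rw [ih, hinv]

lemma Connected.finrank_invariantFunctions_inf [Nonempty D] (hconn : M.Connected) :
    Module.finrank (ZMod 2) (invariantFunctions (ZMod 2) M.rot ⊓
      invariantFunctions (ZMod 2) M.inv : Submodule (ZMod 2) (D → ZMod 2)) = 1 := by
  refine finrank_eq_one ⟨1, rfl, rfl⟩
    (fun h => one_ne_zero (congrArg Subtype.val h)) ?_
  rintro ⟨f, hrot, hinv⟩
  refine ⟨f (Classical.arbitrary D), Subtype.ext (funext fun d => ?_)⟩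
  simpa using
    hconn.apply_eq (mem_invariantFunctions.1 hrot) (mem_invariantFunctions.1 hinv) _ d

lemma Connected.finrank_cycleSpace_add_vertexCount [Nonempty D] (hconn : M.Connected) :
    Module.finrank (ZMod 2) M.cycleSpace + M.vertexCount = M.edgeCount + 1 := by
  have hcycle := finrank_dotForm_orthogonal_add
    (invariantFunctions (ZMod 2) M.rot ⊔ invariantFunctions (ZMod 2) M.inv)
  have hdarts := finrank_dotForm_orthogonal_add (invariantFunctions (ZMod 2) M.inv)
  have hsup := Submodule.finrank_sup_add_finrank_inf_eq
    (invariantFunctions (ZMod 2) M.rot) (invariantFunctions (ZMod 2) M.inv)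
  have hV : Module.finrank (ZMod 2) (invariantFunctions (ZMod 2) M.rot) = M.vertexCount :=
    finrank_invariantFunctions M.rot
  have hE : Module.finrank (ZMod 2) (invariantFunctions (ZMod 2) M.inv) = M.edgeCount :=
    finrank_invariantFunctions M.inv
  rw [orthogonal_sup_eq_inf, M.dotForm_orthogonal_invariantFunctions_inv] at hcycle
  rw [M.dotForm_orthogonal_invariantFunctions_inv] at hdarts
  rw [hconn.finrank_invariantFunctions_inf] at hsup
  unfold cycleSpace
  omega

lemma Connected.finrank_map_faceBoundary_add_one [Nonempty D] (hconn : M.Connected) :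
    Module.finrank (ZMod 2)
      ((invariantFunctions (ZMod 2) (M.rot * M.inv)).map M.faceBoundary) + 1 = M.faceCount := by
  rw [← hconn.finrank_invariantFunctions_inf, ← M.invariantFunctions_inf_ker_faceBoundary,
    finrank_map_add_finrank_inf_ker]
  exact finrank_invariantFunctions (M.rot * M.inv)

/-- Cycles in the plane bound: by Euler's formula, the boundaries of the 2-colourings `f` of the
faces fill the whole cycle space. -/
lemma exists_faceColouring_of_mem_cycleSpace (hconn : M.Connected) (hpl : M.EulerPlanar)
    {g : D → ZMod 2} (hg : g ∈ M.cycleSpace) :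
    ∃ f : D → ZMod 2, (∀ d, f (M.inv d) = f d + g d) ∧ ∀ d, f (M.rot d) = f d + g d := by
  cases isEmpty_or_nonempty D
  · exact ⟨0, isEmptyElim, isEmptyElim⟩
  have hexact : (invariantFunctions (ZMod 2) (M.rot * M.inv)).map M.faceBoundary =
      M.cycleSpace := by
    refine Submodule.eq_of_le_of_finrank_eq M.map_faceBoundary_le_cycleSpace ?_
    have hcycle := hconn.finrank_cycleSpace_add_vertexCount
    have hboundary := hconn.finrank_map_faceBoundary_add_one
    unfold EulerPlanar at hpl
    omega
  obtain ⟨f, hf, rfl⟩ := hexact.ge hg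
  have hinv (d : D) : f (M.inv d) = f d + M.faceBoundary f d := by
    rw [faceBoundary_apply, CharTwo.add_cancel_left]
  exact ⟨f, hinv, fun d => (apply_rot_eq_apply_inv hf d).trans (hinv d)⟩

/-! ### Edges on either side of a cut vertex -/

lemma FourRegular.sameCycle_iff (h4 : M.FourRegular) {a d : D} :
    M.rot.SameCycle a d ↔
      d = a ∨ d = M.rot a ∨ d = M.rot (M.rot a) ∨ d = M.rot (M.rot (M.rot a)) := by
  constructor
  · intro h
    obtain ⟨n, rfl⟩ := h.exists_nat_pow_eq
    clear h
    induction n with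
    | zero => exact .inl rfl
    | succ n ih =>
      rw [pow_succ', Equiv.Perm.mul_apply]
      rcases ih with h | h | h | h <;> simp [h, h4.1]
  · rintro (rfl | rfl | rfl | rfl) <;> simp [Equiv.Perm.SameCycle.refl]

lemma FourRegular.sum_vertex (h4 : M.FourRegular) {A : Type*} [AddCommMonoid A] (φ : D → A)
    (a : D) : ∑ d with M.rot.SameCycle a d, φ d =
      φ a + φ (M.rot a) + φ (M.rot (M.rot a)) + φ (M.rot (M.rot (M.rot a))) := by
  obtain ⟨hfour, hone, htwo⟩ := h4
  have hthree : M.rot (M.rot (M.rot a)) ≠ a := fun h =>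
    hone a ((congrArg M.rot h).symm.trans (hfour a))
  have hvertex : ({d | M.rot.SameCycle a d} : Finset D) =
      {a, M.rot a, M.rot (M.rot a), M.rot (M.rot (M.rot a))} := by
    ext d
    simp [FourRegular.sameCycle_iff ⟨hfour, hone, htwo⟩]
  rw [hvertex, Finset.sum_insert, Finset.sum_insert, Finset.sum_insert, Finset.sum_singleton,
    ← add_assoc, ← add_assoc]
  all_goals simp [(hone _).symm, (htwo _).symm, hthree.symm]

/-- The handshake lemma relative to one vertex: every other vertex contributes an even amount. -/
lemma FourRegular.sum_vertex_eq_zero (h4 : M.FourRegular) {φ : D → ZMod 2} {a : D}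
    (hinv : ∀ d, φ (M.inv d) = φ d)
    (hrot : ∀ d, ¬ M.rot.SameCycle a d → φ (M.rot (M.rot d)) = φ d) :
    φ a + φ (M.rot a) + φ (M.rot (M.rot a)) + φ (M.rot (M.rot (M.rot a))) = 0 := by
  have hrest : ∑ d with ¬ M.rot.SameCycle a d, φ d = 0 := by
    refine Finset.sum_involution (fun d _ => M.rot (M.rot d)) (fun d hd => ?_)
      (fun d _ _ => h4.2.2 d) (fun d hd => ?_) (fun d _ => h4.1 d)
    · rw [hrot d (Finset.mem_filter.1 hd).2, CharTwo.add_self_eq_zero]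
    · simpa using hd
  have htotal := sum_eq_zero_of_apply_inv_eq hinv
  rwa [← Finset.sum_filter_add_sum_filter_not _ (M.rot.SameCycle a), hrest, add_zero,
    h4.sum_vertex] at htotal

lemma FourRegular.mem_cycleSpace (h4 : M.FourRegular) {g : D → ZMod 2}
    (hinv : ∀ d, g (M.inv d) = g d) (hrot : ∀ d, g (M.rot (M.rot d)) = g d) :
    g ∈ M.cycleSpace := by
  refine ⟨fun r hr => ?_, mem_invariantFunctions.2 hinv⟩
  rw [mem_invariantFunctions] at hr
  refine Finset.sum_ninvolution (fun d => M.rot (M.rot d)) (fun d => ?_) (fun d _ => h4.2.2 d)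
    (fun _ => Finset.mem_univ _) h4.1
  rw [hr, hr, hrot, CharTwo.add_self_eq_zero]

/-- `P` splits the edges into two sides that meet in no vertex other than that of the dart `v₀`. -/
structure SeparatesAt (M : CombMap D) (P : D → Bool) (v₀ : D) : Prop where
  edge : ∀ d, P (M.inv d) = P d
  vertex : ∀ d e, M.rot.SameCycle d e → ¬ M.rot.SameCycle v₀ d → P d = P e

namespace SeparatesAt

variable {P : D → Bool} {v₀ : D}

lemma apply_rot (hP : M.SeparatesAt P v₀) {d : D} (hd : ¬ M.rot.SameCycle v₀ d) :
    P (M.rot d) = P d :=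
  (hP.vertex d _ (by simp [Equiv.Perm.SameCycle.refl]) hd).symm

lemma apply_rot_rot (hP : M.SeparatesAt P v₀) {d : D} (hd : ¬ M.rot.SameCycle v₀ d) :
    P (M.rot (M.rot d)) = P d :=
  (hP.vertex d _ (by simp [Equiv.Perm.SameCycle.refl]) hd).symm

lemma apply_rot_rot_rot_eq_iff (hP : M.SeparatesAt P v₀) (h4 : M.FourRegular) :
    P (M.rot (M.rot (M.rot v₀))) = P (M.rot v₀) ↔ P (M.rot (M.rot v₀)) = P v₀ := by
  have hsum := h4.sum_vertex_eq_zero (φ := fun d => if P d then 1 else 0) (a := v₀)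
    (fun d => by simp only [hP.edge]) (fun d hd => by simp only [hP.apply_rot_rot hd])
  revert hsum
  cases P v₀ <;> cases P (M.rot v₀) <;> cases P (M.rot (M.rot v₀)) <;>
    cases P (M.rot (M.rot (M.rot v₀))) <;> decide

/-- If the sides alternated around `v₀`, the edges on the side of `v₀` would form a cycle. The edges
of the other side that lie inside this cycle would then have a single edge-end at `v₀`. -/
lemma apply_rot_eq_of_apply_rot_rot_eq (hP : M.SeparatesAt P v₀) (h4 : M.FourRegular)
    (hconn : M.Connected) (hpl : M.EulerPlanar) (hopp : P (M.rot (M.rot v₀)) = P v₀) :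
    P (M.rot v₀) = P v₀ := by
  by_contra hne
  have hopp' := (hP.apply_rot_rot_rot_eq_iff h4).2 hopp
  have hstraight (d : D) : P (M.rot (M.rot d)) = P d := by
    by_cases hd : M.rot.SameCycle v₀ d
    · rcases h4.sameCycle_iff.1 hd with rfl | rfl | rfl | rfl <;> simp only [h4.1, hopp, hopp']
    · exact hP.apply_rot_rot hd
  let g (d : D) : ZMod 2 := if P d = P v₀ then 1 else 0
  have hg : g ∈ M.cycleSpace :=
    h4.mem_cycleSpace (fun d => by simp only [g, hP.edge]) fun d => by simp only [g, hstraight]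
  obtain ⟨f, hfinv, hfrot⟩ := exists_faceColouring_of_mem_cycleSpace hconn hpl hg
  have hsum := h4.sum_vertex_eq_zero (φ := fun d => if P d = P v₀ then 0 else f d) (a := v₀)
    (fun d => by
      simp only [hP.edge, hfinv, g]
      split_ifs <;> simp)
    (fun d hd => by
      simp only [hstraight, hP.apply_rot hd, hfrot, g]
      split_ifs <;> simp)
  simp [hopp, hopp', hne, hfrot, g, ← add_assoc, CharTwo.add_self_eq_zero] at hsum

lemma apply_rot_rot_ne (hP : M.SeparatesAt P v₀) (h4 : M.FourRegular) (hconn : M.Connected)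
    (hpl : M.EulerPlanar) {a b : D} (ha : M.rot.SameCycle v₀ a) (hb : M.rot.SameCycle v₀ b)
    (hab : P a ≠ P b) : P (M.rot (M.rot v₀)) ≠ P v₀ := by
  intro hopp
  have hopp' := (hP.apply_rot_rot_rot_eq_iff h4).2 hopp
  have hadj := hP.apply_rot_eq_of_apply_rot_rot_eq h4 hconn hpl hopp
  have hconst (d : D) (hd : M.rot.SameCycle v₀ d) : P d = P v₀ := by
    rcases h4.sameCycle_iff.1 hd with rfl | rfl | rfl | rfl <;> simp only [hopp, hopp', hadj]
  exact hab ((hconst a ha).trans (hconst b hb).symm)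

end SeparatesAt

/-! ### Threaded circuits -/

lemma ClosedTC.inter {s t : Set D} (hs : M.ClosedTC s) (ht : M.ClosedTC t) :
    M.ClosedTC (s ∩ t) :=
  fun x hx => ⟨⟨(hs x hx.1).1, (ht x hx.2).1⟩, (hs x hx.1).2, (ht x hx.2).2⟩

lemma ClosedTC.compl {s : Set D} (hs : M.ClosedTC s) : M.ClosedTC sᶜ := by
  have hback : Set.MapsTo (M.rot * M.rot * M.inv).symm s s :=
    Equiv.Perm.perm_symm_mapsTo_of_mapsTo _ fun x hx => (hs x hx).1
  refine fun x hx => ⟨fun h => hx ?_, fun h => hx ?_⟩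
  · exact (M.rot * M.rot * M.inv).symm_apply_apply x ▸ hback h
  · simpa only [M.inv_invol] using (hs _ h).2

lemma ClosedTC.inv_mem_iff {s : Set D} (hs : M.ClosedTC s) {x : D} : M.inv x ∈ s ↔ x ∈ s :=
  ⟨fun h => by simpa only [M.inv_invol] using (hs _ h).2, fun h => (hs x h).2⟩

lemma ClosedTC.rot_rot_mem_iff {s : Set D} (hs : M.ClosedTC s) {x : D} :
    M.rot (M.rot x) ∈ s ↔ x ∈ s := by
  have hmem {t : Set D} (ht : M.ClosedTC t) (hx : x ∈ t) : M.rot (M.rot x) ∈ t := by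
    simpa only [threadStep, M.inv_invol] using (ht _ (ht x hx).2).1
  exact ⟨fun h => by_contra fun hx => hmem hs.compl hx h, hmem hs⟩

lemma Circuit.subset_of_mem {s t : Set D} (hs : M.Circuit s) (ht : M.ClosedTC t) {x : D}
    (hxs : x ∈ s) (hxt : x ∈ t) : s ⊆ t :=
  Set.inter_eq_left.1 (hs.2.2 _ Set.inter_subset_left ⟨x, hxs, hxt⟩ (hs.2.1.inter ht))

lemma Circuit.eq_of_mem {s t : Set D} (hs : M.Circuit s) (ht : M.Circuit t) {x : D}
    (hxs : x ∈ s) (hxt : x ∈ t) : s = t :=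
  (hs.subset_of_mem ht.2.1 hxs hxt).antisymm (ht.subset_of_mem hs.2.1 hxt hxs)

lemma exists_circuit_mem (M : CombMap D) (x : D) : ∃ s, M.Circuit s ∧ x ∈ s := by
  let s := ⋂₀ {t | M.ClosedTC t ∧ x ∈ t}
  have hxs : x ∈ s := fun t ht => ht.2
  have hs : M.ClosedTC s := fun y hy =>
    ⟨fun t ht => (ht.1 y (hy t ht)).1, fun t ht => (ht.1 y (hy t ht)).2⟩
  refine ⟨s, ⟨⟨x, hxs⟩, hs, fun t hts ⟨y, hy⟩ ht => ?_⟩, hxs⟩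
  have hxt : x ∈ t := by_contra fun hx => hts hy tᶜ ⟨ht.compl, hx⟩ hy
  exact hts.antisymm (Set.sInter_subset_of_mem ⟨ht, hxt⟩)

/-- The circuits that do not pass through the vertex of `v₀`. -/
def circuitsAvoiding (M : CombMap D) (v₀ : D) : Set (Set D) :=
  {s | M.Circuit s ∧ ∀ d ∈ s, ¬ M.rot.SameCycle v₀ d}

/-- The circuits on side `b` of `P` that do not pass through the vertex of `v₀`. -/
def sideCircuits (M : CombMap D) (P : D → Bool) (v₀ : D) (b : Bool) : Set (Set D) :=
  {s ∈ M.circuitsAvoiding v₀ | ∀ d ∈ s, P d = b}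

lemma Circuit.circuitCount_eq {s : Set D} {v₀ : D} (hs : M.Circuit s)
    (hvertex : ∀ d, M.rot.SameCycle v₀ d → d ∈ s) :
    M.circuitCount = (M.circuitsAvoiding v₀).ncard + 1 := by
  have hmem : s ∉ M.circuitsAvoiding v₀ := fun h => h.2 v₀ (hvertex v₀ .rfl) .rfl
  have hinsert : {t | M.Circuit t} = insert s (M.circuitsAvoiding v₀) := by
    ext t
    refine ⟨fun ht => or_iff_not_imp_right.2 fun havoid => ?_, ?_⟩
    · obtain ⟨d, hdt, hd⟩ : ∃ d ∈ t, M.rot.SameCycle v₀ d := by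
        by_contra! h
        exact havoid ⟨ht, h⟩
      exact ht.eq_of_mem hs hdt (hvertex d hd)
    · rintro (rfl | ht)
      exacts [hs, ht.1]
  rw [circuitCount, hinsert, Set.ncard_insert_of_notMem hmem]

namespace SeparatesAt

variable {P : D → Bool} {v₀ : D}

lemma circuitsAvoiding_eq_union (hP : M.SeparatesAt P v₀) :
    M.circuitsAvoiding v₀ = M.sideCircuits P v₀ true ∪ M.sideCircuits P v₀ false := by
  refine Set.Subset.antisymm (fun s hs => ?_) (Set.union_subset (fun s h => h.1) fun s h => h.1)
  obtain ⟨x, hx⟩ := hs.1.1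
  have hclosed : M.ClosedTC (s ∩ {d | P d = P x}) := fun d ⟨hd, hdx⟩ => by
    obtain ⟨hstep, hinv⟩ := hs.1.2.1 d hd
    exact ⟨⟨hstep, ((hP.apply_rot_rot (hs.2 _ hinv)).trans (hP.edge d)).trans hdx⟩,
      hinv, (hP.edge d).trans hdx⟩
  have hside : s ∈ M.sideCircuits P v₀ (P x) :=
    ⟨hs, fun d hd => (hs.1.subset_of_mem hclosed hx ⟨hx, rfl⟩ hd).2⟩
  cases h : P x
  · exact .inr (h ▸ hside)
  · exact .inl (h ▸ hside)

lemma ncard_circuitsAvoiding (hP : M.SeparatesAt P v₀) :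
    (M.circuitsAvoiding v₀).ncard =
      (M.sideCircuits P v₀ true).ncard + (M.sideCircuits P v₀ false).ncard := by
  rw [hP.circuitsAvoiding_eq_union, Set.ncard_union_eq]
  refine Set.disjoint_left.2 fun s htrue hfalse => ?_
  obtain ⟨x, hx⟩ := htrue.1.1.1
  exact Bool.noConfusion ((htrue.2 x hx).symm.trans (hfalse.2 x hx))

/-- A circuit crosses from one side to the other an even number of times, while each of the two
threads through `v₀` crosses once. -/
lemma exists_circuit_forall_mem (hP : M.SeparatesAt P v₀) (h4 : M.FourRegular)
    (hopp : P (M.rot (M.rot v₀)) ≠ P v₀) :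
    ∃ s, M.Circuit s ∧ ∀ d, M.rot.SameCycle v₀ d → d ∈ s := by
  classical
  obtain ⟨s, hs, hv₀⟩ := M.exists_circuit_mem v₀
  have hsum := h4.sum_vertex_eq_zero (φ := fun d => if P d ∧ d ∈ s then 1 else 0) (a := v₀)
    (fun d => by simp only [hP.edge, hs.2.1.inv_mem_iff])
    (fun d hd => by simp only [hP.apply_rot_rot hd, hs.2.1.rot_rot_mem_iff])
  have hadj : M.rot v₀ ∈ s := by
    by_contra hadj
    revert hsum hopp
    simp only [hs.2.1.rot_rot_mem_iff, hv₀, hadj]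
    cases P v₀ <;> cases P (M.rot (M.rot v₀)) <;> simp
  refine ⟨s, hs, fun d hd => ?_⟩
  rcases h4.sameCycle_iff.1 hd with rfl | rfl | rfl | rfl <;>
    simp only [hs.2.1.rot_rot_mem_iff, hv₀, hadj]

lemma circuitCount_eq (hP : M.SeparatesAt P v₀) (h4 : M.FourRegular)
    (hopp : P (M.rot (M.rot v₀)) ≠ P v₀) :
    M.circuitCount = (M.circuitsAvoiding v₀).ncard + 1 := by
  obtain ⟨s, hs, hvertex⟩ := hP.exists_circuit_forall_mem h4 hopp
  exact hs.circuitCount_eq hvertex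

end SeparatesAt

/-! ### Adding a loop at the cut vertex -/

section Image

variable {D' : Type} [Fintype D'] [DecidableEq D'] {M' : CombMap D'} {ι : D' → D} {s : Set D'}

lemma closedTC_image_iff (hι : ι.Injective)
    (hstep : ∀ d ∈ s, ι (M'.threadStep d) = M.threadStep (ι d))
    (hinv : ∀ d ∈ s, ι (M'.inv d) = M.inv (ι d)) : M.ClosedTC (ι '' s) ↔ M'.ClosedTC s := by
  simp only [ClosedTC, Set.forall_mem_image]
  refine forall₂_congr fun d hd => ?_
  rw [← hstep d hd, ← hinv d hd, hι.mem_set_image, hι.mem_set_image]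

lemma circuit_image_iff (hι : ι.Injective)
    (hstep : ∀ d ∈ s, ι (M'.threadStep d) = M.threadStep (ι d))
    (hinv : ∀ d ∈ s, ι (M'.inv d) = M.inv (ι d)) : M.Circuit (ι '' s) ↔ M'.Circuit s := by
  rw [Circuit, Circuit, Set.image_nonempty, closedTC_image_iff hι hstep hinv,
    Set.forall_subset_image_iff]
  refine and_congr_right' (and_congr_right' (forall₂_congr fun t ht => ?_))
  rw [Set.image_nonempty, closedTC_image_iff hι (fun d hd => hstep d (ht hd))
    fun d hd => hinv d (ht hd), hι.image_injective.eq_iff]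

end Image

/-- `M'` is side `b` of `M` with a loop added at the vertex of `v₀`: the two darts at that vertex on
the opposite side are kept, and `M'.inv` joins them to each other. -/
structure IsLoopedSide (M : CombMap D) (P : D → Bool) (v₀ : D) (b : Bool)
    (M' : CombMap {d : D // P d = b ∨ M.rot.SameCycle v₀ d}) : Prop where
  coe_rot : ∀ d : {d : D // P d = b ∨ M.rot.SameCycle v₀ d}, (M'.rot d : D) = M.rot d
  coe_inv : ∀ d : {d : D // P d = b ∨ M.rot.SameCycle v₀ d}, P d = b → (M'.inv d : D) = M.inv d
  loop : ∀ d : {d : D // P d = b ∨ M.rot.SameCycle v₀ d}, P d = (!b) → P (M'.inv d) = !b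

namespace IsLoopedSide

variable {P : D → Bool} {v₀ : D} {b : Bool}
  {M' : CombMap {d : D // P d = b ∨ M.rot.SameCycle v₀ d}}

lemma sameCycle_iff (h : M.IsLoopedSide P v₀ b M')
    {d e : {d : D // P d = b ∨ M.rot.SameCycle v₀ d}} :
    M'.rot.SameCycle d e ↔ M.rot.SameCycle (d : D) e := by
  have hmem (d : D) : P (M.rot d) = b ∨ M.rot.SameCycle v₀ (M.rot d) ↔
      P d = b ∨ M.rot.SameCycle v₀ d := by
    refine ⟨fun hd => ?_, fun hd => h.coe_rot ⟨d, hd⟩ ▸ (M'.rot ⟨d, hd⟩).2⟩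
    have hpre : (M'.rot.symm ⟨M.rot d, hd⟩ : D) = d :=
      M.rot.injective (by rw [← h.coe_rot, Equiv.apply_symm_apply])
    exact hpre ▸ (M'.rot.symm ⟨M.rot d, hd⟩).2
  have hrot : M'.rot = M.rot.subtypePerm hmem := Equiv.ext fun d => Subtype.ext (h.coe_rot d)
  rw [hrot, Equiv.Perm.sameCycle_subtypePerm]

lemma fourRegular (h : M.IsLoopedSide P v₀ b M') (h4 : M.FourRegular) : M'.FourRegular := by
  simpa [FourRegular, Subtype.ext_iff, h.coe_rot] using
    And.intro (fun d _ => h4.1 d) (And.intro (fun d _ => h4.2.1 d) fun d _ => h4.2.2 d)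

lemma separatesAt (h : M.IsLoopedSide P v₀ b M') (hP : M.SeparatesAt P v₀) :
    M'.SeparatesAt (fun d => P d) ⟨v₀, .inr .rfl⟩ where
  edge d := by
    by_cases hd : P d = b
    · rw [h.coe_inv d hd, hP.edge]
    · have hd' : P d = !b := Bool.eq_not.2 hd
      rw [h.loop d hd', hd']
  vertex d e hde hd := hP.vertex d e (h.sameCycle_iff.1 hde) (h.sameCycle_iff.not.1 hd)

lemma image_circuitsAvoiding (h : M.IsLoopedSide P v₀ b M') :
    Set.image Subtype.val '' M'.circuitsAvoiding ⟨v₀, .inr .rfl⟩ = M.sideCircuits P v₀ b := by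
  have hcircuit {s : Set {d : D // P d = b ∨ M.rot.SameCycle v₀ d}}
      (hs : ∀ d ∈ s, P (d : D) = b) : M.Circuit (Subtype.val '' s) ↔ M'.Circuit s :=
    circuit_image_iff Subtype.val_injective
      (fun d hd => by rw [threadStep, h.coe_rot, h.coe_rot, h.coe_inv d (hs d hd), threadStep])
      fun d hd => h.coe_inv d (hs d hd)
  ext s
  constructor
  · rintro ⟨t, ⟨ht, havoid⟩, rfl⟩
    have havoid' (d) (hd : d ∈ t) : ¬ M.rot.SameCycle v₀ (d : D) :=
      h.sameCycle_iff.not.1 (havoid d hd)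
    have hside (d) (hd : d ∈ t) : P (d : D) = b := d.2.resolve_right (havoid' d hd)
    exact ⟨⟨(hcircuit hside).2 ht, Set.forall_mem_image.2 havoid'⟩, Set.forall_mem_image.2 hside⟩
  · rintro ⟨⟨hs, havoid⟩, hside⟩
    obtain ⟨t, rfl⟩ : ∃ t : Set {d : D // P d = b ∨ M.rot.SameCycle v₀ d}, Subtype.val '' t = s :=
      ⟨Subtype.val ⁻¹' s,
        Set.image_preimage_eq_of_subset fun d hd => ⟨⟨d, .inl (hside d hd)⟩, rfl⟩⟩
    rw [Set.forall_mem_image] at havoid hside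
    exact ⟨t, ⟨(hcircuit hside).1 hs, fun d hd => h.sameCycle_iff.not.2 (havoid hd)⟩, rfl⟩

lemma circuitCount_eq (h : M.IsLoopedSide P v₀ b M') (h4 : M.FourRegular)
    (hP : M.SeparatesAt P v₀) (hopp : P (M.rot (M.rot v₀)) ≠ P v₀) :
    M'.circuitCount = (M.sideCircuits P v₀ b).ncard + 1 := by
  rw [(h.separatesAt hP).circuitCount_eq (h.fourRegular h4) (by simpa only [h.coe_rot] using hopp),
    ← h.image_circuitsAvoiding,
    Set.ncard_image_of_injective _ Subtype.val_injective.image_injective]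

end IsLoopedSide

end CombMap

/-- Let `G` be a connected 4-regular plane graph with a
cutpoint `c` (the vertex of dart `v₀`) separating `G₁` (darts with `P = true`)
from `G₂` (darts with `P = false`). Let `G'₁` be `G₁` with a loop added at `c`
(its darts are the `true` darts together with the darts at `c`, the two `false`
darts at `c` forming the new loop), with the embedding induced from `G`;
similarly `G'₂`. If `C`, `C₁`, `C₂` are the threaded circuit partitions of
`G`, `G'₁`, `G'₂`, then `|C| = |C₁| + |C₂| - 1`. -/
theorem cutpoint_circuit_count
    {D : Type} [Fintype D] [DecidableEq D] (M : CombMap D)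
    (h4 : M.FourRegular) (hconn : M.Connected) (hpl : M.EulerPlanar)
    (P : D → Bool) (v₀ : D)
    (hedge : ∀ d, P (M.inv d) = P d)
    (hvert : ∀ d e, M.rot.SameCycle d e → ¬ M.rot.SameCycle v₀ d → P d = P e)
    (h1 : ∃ d, M.rot.SameCycle v₀ d ∧ P d = true)
    (h2 : ∃ d, M.rot.SameCycle v₀ d ∧ P d = false)
    (M₁ : CombMap {d : D // P d = true ∨ M.rot.SameCycle v₀ d})
    (M₂ : CombMap {d : D // P d = false ∨ M.rot.SameCycle v₀ d})
    (hrot1 : ∀ d : {d : D // P d = true ∨ M.rot.SameCycle v₀ d}, ((M₁.rot d) : D) = M.rot (d : D))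
    (hrot2 : ∀ d : {d : D // P d = false ∨ M.rot.SameCycle v₀ d}, ((M₂.rot d) : D) = M.rot (d : D))
    (hinv1 : ∀ d : {d : D // P d = true ∨ M.rot.SameCycle v₀ d}, (P (d : D) = true → ((M₁.inv d) : D) = M.inv (d : D)) ∧
      (P (d : D) = false → P ((M₁.inv d) : D) = false ∧ M₁.inv d ≠ d ∧
        M.rot.SameCycle v₀ ((M₁.inv d) : D)))
    (hinv2 : ∀ d : {d : D // P d = false ∨ M.rot.SameCycle v₀ d}, (P (d : D) = false → ((M₂.inv d) : D) = M.inv (d : D)) ∧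
      (P (d : D) = true → P ((M₂.inv d) : D) = true ∧ M₂.inv d ≠ d ∧
        M.rot.SameCycle v₀ ((M₂.inv d) : D))) :
    (M.circuitCount : ℤ) = (M₁.circuitCount : ℤ) + (M₂.circuitCount : ℤ) - 1 := by
  have hP : M.SeparatesAt P v₀ := ⟨hedge, hvert⟩
  have hopp : P (M.rot (M.rot v₀)) ≠ P v₀ := by
    obtain ⟨a, ha, hPa⟩ := h1
    obtain ⟨b, hb, hPb⟩ := h2
    exact hP.apply_rot_rot_ne h4 hconn hpl ha hb (by rw [hPa, hPb]; decide)
  have hside₁ : M.IsLoopedSide P v₀ true M₁ :=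
    ⟨hrot1, fun d => (hinv1 d).1, fun d hd => ((hinv1 d).2 hd).1⟩
  have hside₂ : M.IsLoopedSide P v₀ false M₂ :=
    ⟨hrot2, fun d => (hinv2 d).1, fun d hd => ((hinv2 d).2 hd).1⟩
  rw [hP.circuitCount_eq h4 hopp, hP.ncard_circuitsAvoiding, hside₁.circuitCount_eq h4 hP hopp,
    hside₂.circuitCount_eq h4 hP hopp]
  push_cast
  ring
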